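/- Let (k_i)_{i ∈ F} be a finite family of real orders, (φ_j)_{j ∈ G} a finite family of orientations, (c_{ij}) complex coefficients, and W = Σ_{i,j} c_{ij}·S^{k_i, j} the combined filter. Let s > 0, a > 0, and let I : ℂ → ℝ be a real-valued measurable image such that x ↦ I(x)·S^{k_i, j}(x) is integrable on the disk {x : ‖x‖ ≤ a·s} for every i, j, and x ↦ I(s·x)·S^{k_i,j}(x) is integrable on the disk {x : ‖x‖ ≤ a} for every i, j. Then the cross-correlation of the scaled image with the real part of the filter satisfies ∫_{‖x‖ ≤ a} I(s·x)·Re(W(x)) dx = Re( s^(m−2)·Σ_{i ∈ F} exp(−i·k_i·log s)·Σ_{j ∈ G} c_{ij}·∫_{‖y‖ ≤ a·s} I(y)·S^{k_i, j}(y) dy ). That is, restricting to the real part of the filter does not change scale steerability for real-valued images. -/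

import Mathlib

/-!
Under the dilation `y = s • x` the argument is unchanged, `‖y‖ = s * ‖x‖` and
`log ‖y‖ = log s + log ‖x‖`, so each harmonic is homogeneous up to a phase:
`S(x) = s ^ m * exp (-i k log s) * S(s x)` for `x ≠ 0`
(`logRadialHarmonic_eq_dilate`). The change of variables contributes the Jacobian `s⁻²`, which
gives the steering relation for a single harmonic (`setIntegral_steer`). Finite linearity extends
it to `W`. As the image is real, `I (s x) * Re (W x) = Re (I (s x) * W x)`, and the real part
commutes with the integral because `x ↦ I (s x) * W x` is integrable on the disk.
-/

open MeasureTheory Complex Real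

/-- Distance between two angles in the circle ℝ/2πℤ. -/
noncomputable def circDist (φ ψ : ℝ) : ℝ :=
  dist (φ : AddCircle (2 * Real.pi)) (ψ : AddCircle (2 * Real.pi))

/-- Angular Gaussian kernel K(φ, ψ) = exp(−d(φ,ψ)²/(2σ²)). -/
noncomputable def angKernel (σ φ ψ : ℝ) : ℝ :=
  Real.exp (-(circDist φ ψ) ^ 2 / (2 * σ ^ 2))

/-- The log-radial harmonic of order k and orientation φj:
S(x) = ‖x‖^(−m)·(K(arg x, φj) + K(arg x, φj + π))·exp(i·(k·log ‖x‖ + β)). -/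
noncomputable def logRadialHarmonic (m k β φj σ : ℝ) (x : ℂ) : ℂ :=
  ((‖x‖ ^ (-m) : ℝ) : ℂ) *
    ((angKernel σ (Complex.arg x) φj + angKernel σ (Complex.arg x) (φj + Real.pi) : ℝ) : ℂ) *
    Complex.exp (Complex.I * ((k : ℂ) * (Real.log ‖x‖ : ℂ) + (β : ℂ)))
/-- Homogeneity of the log-radial harmonic: a dilation by `s` only changes it by the factor
`s ^ (-m) * exp (i k log s)`. -/
theorem logRadialHarmonic_eq_dilate (m k β φj σ : ℝ) {s : ℝ} (hs : 0 < s) {x : ℂ} (hx : x ≠ 0) :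
    logRadialHarmonic m k β φj σ x =
      ((s ^ m : ℝ) : ℂ) * Complex.exp (-(Complex.I * (k : ℂ) * (Real.log s : ℂ))) *
        logRadialHarmonic m k β φj σ ((s : ℂ) * x) := by
  have hx' : 0 < ‖x‖ := norm_pos_iff.mpr hx
  have hn : ‖(s : ℂ) * x‖ = s * ‖x‖ := by
    rw [norm_mul, Complex.norm_real, Real.norm_of_nonneg hs.le]
  have hpow : ‖x‖ ^ (-m) = s ^ m * (s * ‖x‖) ^ (-m) := by
    rw [Real.mul_rpow hs.le hx'.le, ← mul_assoc, ← Real.rpow_add hs, add_neg_cancel,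
      Real.rpow_zero, one_mul]
  have hexp : Complex.exp (Complex.I * ((k : ℂ) * (Real.log ‖x‖ : ℂ) + (β : ℂ))) =
      Complex.exp (-(Complex.I * (k : ℂ) * (Real.log s : ℂ))) *
        Complex.exp (Complex.I * ((k : ℂ) * (Real.log (s * ‖x‖) : ℂ) + (β : ℂ))) := by
    rw [← Complex.exp_add, Real.log_mul hs.ne' hx'.ne']
    congr 1
    push_cast
    ring
  unfold logRadialHarmonic
  rw [hn, Complex.arg_real_mul x hs, hexp, hpow]
  push_cast
  ring

theorem ae_closedBall_ne_zero (a : ℝ) :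
    ∀ᵐ x : ℂ ∂(volume.restrict (Metric.closedBall (0 : ℂ) a)), x ≠ 0 :=
  ae_restrict_of_ae (Measure.ae_ne volume 0)

open scoped Pointwise in
/-- Scale steering of the response to a single harmonic. -/
theorem setIntegral_steer (m k β φj σ : ℝ) {s a : ℝ} (hs : 0 < s) (ha : 0 < a) (I : ℂ → ℝ) :
    ∫ x in Metric.closedBall (0 : ℂ) a,
        (I ((s : ℂ) * x) : ℂ) * logRadialHarmonic m k β φj σ x =
      ((s ^ (m - 2) : ℝ) : ℂ) * Complex.exp (-(Complex.I * (k : ℂ) * (Real.log s : ℂ))) *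
        ∫ y in Metric.closedBall (0 : ℂ) (a * s),
          (I y : ℂ) * logRadialHarmonic m k β φj σ y := by
  have hball : s • Metric.closedBall (0 : ℂ) a = Metric.closedBall (0 : ℂ) (a * s) := by
    rw [_root_.smul_closedBall s (0 : ℂ) ha.le, smul_zero, Real.norm_of_nonneg hs.le, mul_comm]
  have hcov := Measure.setIntegral_comp_smul_of_pos (volume : Measure ℂ)
    (fun y => (I y : ℂ) * logRadialHarmonic m k β φj σ y) (Metric.closedBall (0 : ℂ) a) hs
  simp only [hball, Complex.real_smul, Complex.finrank_real_complex] at hcov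
  have hae : ∫ x in Metric.closedBall (0 : ℂ) a,
        (I ((s : ℂ) * x) : ℂ) * logRadialHarmonic m k β φj σ x =
      ∫ x in Metric.closedBall (0 : ℂ) a,
        (((s ^ m : ℝ) : ℂ) * Complex.exp (-(Complex.I * (k : ℂ) * (Real.log s : ℂ)))) *
          ((I ((s : ℂ) * x) : ℂ) * logRadialHarmonic m k β φj σ ((s : ℂ) * x)) := by
    refine integral_congr_ae ?_
    filter_upwards [ae_closedBall_ne_zero a] with x hx
    rw [logRadialHarmonic_eq_dilate m k β φj σ hs hx]
    ring
  have hs2 : s ^ (m - 2) = s ^ m * (s ^ 2)⁻¹ := by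
    rw [Real.rpow_sub hs, Real.rpow_two, div_eq_mul_inv]
  rw [hae, integral_const_mul, hcov, hs2]
  push_cast
  ring

/-- For a real-valued image, taking the real part of the filter preserves scale
steerability: ∫_{‖x‖ ≤ a} I(s·x)·Re(W(x)) dx
  = Re( s^(m−2)·Σᵢ exp(−i·kᵢ·log s)·Σⱼ cᵢⱼ·∫_{‖y‖ ≤ a·s} I(y)·S^{kᵢ,j}(y) dy ). -/
theorem real_part_response_steer
    (m β σ : ℝ) (hσ : 0 < σ)
    {F G : Type*} [Fintype F] [Fintype G]
    (k : F → ℝ) (φ : G → ℝ) (c : F → G → ℂ)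
    (W : ℂ → ℂ)
    (hW : ∀ x : ℂ, x ≠ 0 →
      W x = ∑ i : F, ∑ j : G, c i j * logRadialHarmonic m (k i) β (φ j) σ x)
    (s a : ℝ) (hs : 0 < s) (ha : 0 < a)
    (I : ℂ → ℝ) (hI : Measurable I)
    (h₁ : ∀ (i : F) (j : G),
      IntegrableOn (fun x => (I x : ℂ) * logRadialHarmonic m (k i) β (φ j) σ x)
        (Metric.closedBall (0 : ℂ) (a * s)) volume)
    (h₂ : ∀ (i : F) (j : G),
      IntegrableOn (fun x => (I ((s : ℂ) * x) : ℂ) * logRadialHarmonic m (k i) β (φ j) σ x)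
        (Metric.closedBall (0 : ℂ) a) volume) :
    ∫ x in Metric.closedBall (0 : ℂ) a, I ((s : ℂ) * x) * (W x).re
      = (((s ^ (m - 2) : ℝ) : ℂ) *
          ∑ i : F, Complex.exp (-(Complex.I * (k i : ℂ) * (Real.log s : ℂ))) *
            ∑ j : G, c i j *
              ∫ y in Metric.closedBall (0 : ℂ) (a * s),
                (I y : ℂ) * logRadialHarmonic m (k i) β (φ j) σ y).re := by
  have hterm : ∀ (i : F) (j : G), IntegrableOn
      (fun x => c i j * ((I ((s : ℂ) * x) : ℂ) * logRadialHarmonic m (k i) β (φ j) σ x))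
      (Metric.closedBall (0 : ℂ) a) volume := fun i j => (h₂ i j).const_mul (c i j)
  have hinner : ∀ i : F, IntegrableOn
      (fun x => ∑ j : G, c i j * ((I ((s : ℂ) * x) : ℂ) * logRadialHarmonic m (k i) β (φ j) σ x))
      (Metric.closedBall (0 : ℂ) a) volume :=
    fun i => integrable_finsetSum _ fun j _ => hterm i j
  have hsum : IntegrableOn
      (fun x => ∑ i : F, ∑ j : G,
        c i j * ((I ((s : ℂ) * x) : ℂ) * logRadialHarmonic m (k i) β (φ j) σ x))
      (Metric.closedBall (0 : ℂ) a) volume :=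
    integrable_finsetSum _ fun i _ => hinner i
  calc ∫ x in Metric.closedBall (0 : ℂ) a, I ((s : ℂ) * x) * (W x).re
      = ∫ x in Metric.closedBall (0 : ℂ) a, (∑ i : F, ∑ j : G,
          c i j * ((I ((s : ℂ) * x) : ℂ) * logRadialHarmonic m (k i) β (φ j) σ x)).re := by
        refine integral_congr_ae ?_
        -- `W` is only prescribed away from the origin, a null set
        filter_upwards [ae_closedBall_ne_zero a] with x hx
        rw [← Complex.re_ofReal_mul, hW x hx, Finset.mul_sum]
        simp only [Finset.mul_sum, mul_left_comm]
    _ = (∫ x in Metric.closedBall (0 : ℂ) a, ∑ i : F, ∑ j : G,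
          c i j * ((I ((s : ℂ) * x) : ℂ) * logRadialHarmonic m (k i) β (φ j) σ x)).re :=
        integral_re hsum
    _ = _ := by
        rw [integral_finsetSum _ fun i _ => hinner i, Finset.mul_sum]
        congr 1
        refine Finset.sum_congr rfl fun i _ => ?_
        rw [integral_finsetSum _ fun j _ => hterm i j, Finset.mul_sum, Finset.mul_sum]
        refine Finset.sum_congr rfl fun j _ => ?_
        rw [integral_const_mul, setIntegral_steer m (k i) β (φ j) σ hs ha I]
        ring
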